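/- Let u : ℝ → ℝ → ℝ be a smooth function of (x,t) with u_x(x,t) < 0 for all (x,t), satisfying the 2nd potential Kupershmidt equation u_t = u_{5x} - 5·u_{xx}u_{4x}/u_x - (15/4)·u_{xxx}²/u_x + (65/4)·u_{xx}²u_{xxx}/u_x² - (135/16)·u_{xx}⁴/u_x³. Then U := (1/2)·ln(-2·u_x) satisfies the 1st potential Kupershmidt equation U_t = U_{5x} - 5U_{xx}U_{xxx} - 5U_x²U_{xxx} - 5U_xU_{xx}² + U_x⁵. -/

import Mathlib

/-!
Write `v = u_x` and `w = U_x`. Since `U = (1/2) ln(-2v)`, we have `v_x = 2 w v`, hence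
`(v f)_x = v (f_x + 2 w f)` for every smooth `f` (`dx_mul_of_log_deriv`). Iterating, each
`x`-derivative of `u` is `v` times a differential polynomial in `w`, and the 2nd potential
Kupershmidt equation becomes `u_t = v g` with
`g = 2 w_xxx - 4 w w_xx - 3 w_x² - 2 w² w_x + w⁴`.
By symmetry of mixed partials (`dt_dx_comm`), `v_t = (u_t)_x = v (g_x + 2 w g)`, so
`U_t = v_t / (2v) = g_x / 2 + w g`, which expands to the right-hand side of the 1st potential
Kupershmidt equation.
-/

/-- Total `x`-derivative of a function of `(x, t)`. -/
noncomputable def dx (f : ℝ → ℝ → ℝ) : ℝ → ℝ → ℝ := fun x t => deriv (fun y => f y t) x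

/-- Total `t`-derivative of a function of `(x, t)`. -/
noncomputable def dt (f : ℝ → ℝ → ℝ) : ℝ → ℝ → ℝ := fun x t => deriv (fun s => f x s) t

/-- The 2nd potential Kupershmidt equation. -/
def Kup2 (u : ℝ → ℝ → ℝ) : Prop :=
  ∀ x t, dt u x t =
    dx (dx (dx (dx (dx u)))) x t
    - 5 * dx (dx u) x t * dx (dx (dx (dx u))) x t / dx u x t
    - (15/4) * (dx (dx (dx u)) x t)^2 / dx u x t
    + (65/4) * (dx (dx u) x t)^2 * dx (dx (dx u)) x t / (dx u x t)^2
    - (135/16) * (dx (dx u) x t)^4 / (dx u x t)^3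

/-- The 1st potential Kupershmidt equation. -/
def Kup1 (U : ℝ → ℝ → ℝ) : Prop :=
  ∀ x t, dt U x t =
    dx (dx (dx (dx (dx U)))) x t
    - 5 * dx (dx U) x t * dx (dx (dx U)) x t
    - 5 * (dx U x t)^2 * dx (dx (dx U)) x t
    - 5 * dx U x t * (dx (dx U) x t)^2
    + (dx U x t)^5

/-- Joint smoothness of a curried function of `(x, t)`. -/
def Smooth2 (f : ℝ → ℝ → ℝ) : Prop :=
  ContDiff ℝ (⊤ : ℕ∞) (fun p : ℝ × ℝ => f p.1 p.2)

theorem Smooth2.hasDerivAt_fderiv_x {f : ℝ → ℝ → ℝ} (hf : Smooth2 f) (x t : ℝ) :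
    HasDerivAt (fun y => f y t) (fderiv ℝ (fun p : ℝ × ℝ => f p.1 p.2) (x, t) (1, 0)) x := by
  have h : HasFDerivAt (fun p : ℝ × ℝ => f p.1 p.2) _ (x, t) :=
    ((hf.differentiable (by simp)) (x, t)).hasFDerivAt
  exact h.comp_hasDerivAt (f := fun y : ℝ => (y, t)) x
    ((hasDerivAt_id x).prodMk (hasDerivAt_const x t))

theorem Smooth2.hasDerivAt_fderiv_t {f : ℝ → ℝ → ℝ} (hf : Smooth2 f) (x t : ℝ) :
    HasDerivAt (fun s => f x s) (fderiv ℝ (fun p : ℝ × ℝ => f p.1 p.2) (x, t) (0, 1)) t := by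
  have h : HasFDerivAt (fun p : ℝ × ℝ => f p.1 p.2) _ (x, t) :=
    ((hf.differentiable (by simp)) (x, t)).hasFDerivAt
  exact h.comp_hasDerivAt (f := fun s : ℝ => (x, s)) t
    ((hasDerivAt_const t x).prodMk (hasDerivAt_id t))

theorem Smooth2.dx_eq {f : ℝ → ℝ → ℝ} (hf : Smooth2 f) :
    dx f = fun x t => fderiv ℝ (fun p : ℝ × ℝ => f p.1 p.2) (x, t) (1, 0) := by
  funext x t
  exact (hf.hasDerivAt_fderiv_x x t).deriv

theorem Smooth2.dt_eq {f : ℝ → ℝ → ℝ} (hf : Smooth2 f) :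
    dt f = fun x t => fderiv ℝ (fun p : ℝ × ℝ => f p.1 p.2) (x, t) (0, 1) := by
  funext x t
  exact (hf.hasDerivAt_fderiv_t x t).deriv

theorem Smooth2.hasDerivAt_x {f : ℝ → ℝ → ℝ} (hf : Smooth2 f) (x t : ℝ) :
    HasDerivAt (fun y => f y t) (dx f x t) x :=
  (hf.hasDerivAt_fderiv_x x t).differentiableAt.hasDerivAt

theorem Smooth2.hasDerivAt_t {f : ℝ → ℝ → ℝ} (hf : Smooth2 f) (x t : ℝ) :
    HasDerivAt (fun s => f x s) (dt f x t) t :=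
  (hf.hasDerivAt_fderiv_t x t).differentiableAt.hasDerivAt

theorem Smooth2.fderiv_apply {f : ℝ → ℝ → ℝ} (hf : Smooth2 f) (v : ℝ × ℝ) :
    ContDiff ℝ (⊤ : ℕ∞) (fun p : ℝ × ℝ => fderiv ℝ (fun p : ℝ × ℝ => f p.1 p.2) p v) :=
  (ContDiff.fderiv_right (m := (⊤ : ℕ∞)) hf (by simp)).clm_apply contDiff_const

theorem Smooth2.smooth_dx {f : ℝ → ℝ → ℝ} (hf : Smooth2 f) : Smooth2 (dx f) := by
  rw [hf.dx_eq]
  exact hf.fderiv_apply (1, 0)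

theorem Smooth2.smooth_dt {f : ℝ → ℝ → ℝ} (hf : Smooth2 f) : Smooth2 (dt f) := by
  rw [hf.dt_eq]
  exact hf.fderiv_apply (0, 1)

theorem dt_dx_comm {f : ℝ → ℝ → ℝ} (hf : Smooth2 f) : dt (dx f) = dx (dt f) := by
  funext x t
  rw [hf.smooth_dx.dt_eq, hf.smooth_dt.dx_eq, hf.dx_eq, hf.dt_eq]
  have hd : DifferentiableAt ℝ (fderiv ℝ (fun p : ℝ × ℝ => f p.1 p.2)) (x, t) :=
    (ContDiff.fderiv_right (m := (⊤ : ℕ∞)) hf (by simp)).differentiable (by simp) _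
  have hsymm : IsSymmSndFDerivAt ℝ (fun p : ℝ × ℝ => f p.1 p.2) (x, t) :=
    ContDiffAt.isSymmSndFDerivAt (n := (⊤ : ℕ∞)) hf.contDiffAt
      (by simpa using WithTop.coe_le_coe.2 (le_top : (2 : ℕ∞) ≤ ⊤))
  change fderiv ℝ (fun p : ℝ × ℝ => fderiv ℝ (fun p : ℝ × ℝ => f p.1 p.2) p (1, 0)) (x, t) (0, 1)
    = fderiv ℝ (fun p : ℝ × ℝ => fderiv ℝ (fun p : ℝ × ℝ => f p.1 p.2) p (0, 1)) (x, t) (1, 0)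
  rw [fderiv_clm_apply hd (differentiableAt_const _), fderiv_clm_apply hd (differentiableAt_const _)]
  simpa using hsymm (0, 1) (1, 0)

/-- If `v_x = 2 w v`, then differentiating `v f` amounts to applying `∂_x + 2w` to `f`. -/
theorem dx_mul_of_log_deriv {v w f f' : ℝ → ℝ → ℝ} (hv : Smooth2 v)
    (hvx : ∀ x t, dx v x t = v x t * (2 * w x t))
    (hf : ∀ x t, HasDerivAt (fun y => f y t) (f' x t) x) :
    dx (fun x t => v x t * f x t) = fun x t => v x t * (f' x t + 2 * w x t * f x t) := by
  funext x t
  refine ((hv.hasDerivAt_x x t).mul (hf x t)).deriv.trans ?_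
  rw [hvx]
  ring

/-- If `u` solves the 2nd potential Kupershmidt equation with `u_x < 0`, then
`U = (1/2)·ln(-2u_x)` solves the 1st potential Kupershmidt equation. -/
theorem kup2_to_kup1
    (u : ℝ → ℝ → ℝ)
    (hu : ContDiff ℝ (⊤ : ℕ∞) (fun p : ℝ × ℝ => u p.1 p.2))
    (hux : ∀ x t, dx u x t < 0)
    (heq : Kup2 u) :
    Kup1 (fun x t => (1/2) * Real.log (-2 * dx u x t)) := by
  have hu' : Smooth2 u := hu
  obtain ⟨v, hv⟩ : ∃ v, v = dx u := ⟨_, rfl⟩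
  obtain ⟨U, hU⟩ : ∃ U : ℝ → ℝ → ℝ, U = fun x t => (1/2) * Real.log (-2 * v x t) := ⟨_, rfl⟩
  have hvs : Smooth2 v := hv ▸ hu'.smooth_dx
  have hv0 : ∀ x t, v x t ≠ 0 := fun x t => by rw [hv]; exact (hux x t).ne
  have hUs : Smooth2 U := by
    rw [hU]
    exact contDiff_const.mul ((contDiff_const.mul hvs).log
      fun p => mul_ne_zero (by norm_num) (hv0 p.1 p.2))
  rw [← hv, ← hU]
  have hvx : ∀ x t, dx v x t = v x t * (2 * dx U x t) := fun x t => by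
    have h : HasDerivAt (fun y => U y t) (1/2 * (-2 * dx v x t / (-2 * v x t))) x := by
      rw [hU]
      exact (((hvs.hasDerivAt_x x t).const_mul (-2)).log
        (mul_ne_zero (by norm_num) (hv0 x t))).const_mul (1/2)
    have h2 := (hUs.hasDerivAt_x x t).unique h
    rw [h2]
    have := hv0 x t
    field_simp
  have hvt : ∀ x t, dt v x t = v x t * (2 * dt U x t) := fun x t => by
    have h : HasDerivAt (fun s => U x s) (1/2 * (-2 * dt v x t / (-2 * v x t))) t := by
      rw [hU]
      exact (((hvs.hasDerivAt_t x t).const_mul (-2)).log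
        (mul_ne_zero (by norm_num) (hv0 x t))).const_mul (1/2)
    have h2 := (hUs.hasDerivAt_t x t).unique h
    rw [h2]
    have := hv0 x t
    field_simp
  unfold Kup2 at heq
  rw [← hv] at heq
  unfold Kup1
  have hcomm := dt_dx_comm hu'
  rw [← hv] at hcomm
  -- Abstract names for `w = U_x` and its `x`-derivatives keep the final identities polynomial in
  -- independent atoms.
  obtain ⟨w, hw⟩ : ∃ w, w = dx U := ⟨_, rfl⟩
  have hws : Smooth2 w := hw ▸ hUs.smooth_dx
  rw [← hw] at hvx ⊢
  obtain ⟨w1, hw1⟩ : ∃ w1, w1 = dx w := ⟨_, rfl⟩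
  have hw1s : Smooth2 w1 := hw1 ▸ hws.smooth_dx
  obtain ⟨w2, hw2⟩ : ∃ w2, w2 = dx w1 := ⟨_, rfl⟩
  have hw2s : Smooth2 w2 := hw2 ▸ hw1s.smooth_dx
  obtain ⟨w3, hw3⟩ : ∃ w3, w3 = dx w2 := ⟨_, rfl⟩
  have hw3s : Smooth2 w3 := hw3 ▸ hw2s.smooth_dx
  obtain ⟨w4, hw4⟩ : ∃ w4, w4 = dx w3 := ⟨_, rfl⟩
  rw [← hw1, ← hw2, ← hw3, ← hw4]
  have d0 : ∀ x t, HasDerivAt (fun y => w y t) (w1 x t) x := fun x t => by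
    rw [hw1]; exact hws.hasDerivAt_x x t
  have d1 : ∀ x t, HasDerivAt (fun y => w1 y t) (w2 x t) x := fun x t => by
    rw [hw2]; exact hw1s.hasDerivAt_x x t
  have d2 : ∀ x t, HasDerivAt (fun y => w2 y t) (w3 x t) x := fun x t => by
    rw [hw3]; exact hw2s.hasDerivAt_x x t
  have d3 : ∀ x t, HasDerivAt (fun y => w3 y t) (w4 x t) x := fun x t => by
    rw [hw4]; exact hw3s.hasDerivAt_x x t
  have e1 : dx v = fun x t => v x t * (2 * w x t) := by
    funext x t; exact hvx x t
  have e2 : dx (dx v) = fun x t => v x t * (2 * w1 x t + 4 * w x t ^ 2) := by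
    rw [e1, dx_mul_of_log_deriv hvs hvx (fun x t => (d0 x t).const_mul 2)]
    funext x t; ring
  have e3 : dx (dx (dx v)) = fun x t =>
      v x t * (2 * w2 x t + 12 * (w x t * w1 x t) + 8 * w x t ^ 3) := by
    rw [e2, dx_mul_of_log_deriv hvs hvx
      (fun x t => ((d1 x t).const_mul 2).fun_add (((d0 x t).fun_pow 2).const_mul 4))]
    funext x t; push_cast; ring
  have e4 : dx (dx (dx (dx v))) = fun x t =>
      v x t * (2 * w3 x t + 16 * w x t * w2 x t + 12 * w1 x t ^ 2
        + 48 * w x t ^ 2 * w1 x t + 16 * w x t ^ 4) := by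
    rw [e3, dx_mul_of_log_deriv hvs hvx
      (fun x t => (((d2 x t).const_mul 2).fun_add (((d0 x t).fun_mul (d1 x t)).const_mul 12)).fun_add
        (((d0 x t).fun_pow 3).const_mul 8))]
    funext x t; push_cast; ring
  have eg : dt u = fun x t => v x t * (2 * w3 x t - 4 * (w x t * w2 x t) - 3 * w1 x t ^ 2
      - 2 * (w x t ^ 2 * w1 x t) + w x t ^ 4) := by
    funext x t
    rw [heq x t, e4, e3, e2, e1]
    have := hv0 x t
    field_simp
    ring
  rw [eg, dx_mul_of_log_deriv hvs hvx
    (fun x t => (((((d3 x t).const_mul 2).fun_sub (((d0 x t).fun_mul (d2 x t)).const_mul 4)).fun_sub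
      (((d1 x t).fun_pow 2).const_mul 3)).fun_sub
      ((((d0 x t).fun_pow 2).fun_mul (d1 x t)).const_mul 2)).fun_add ((d0 x t).fun_pow 4))] at hcomm
  intro x t
  have h := congrFun (congrFun hcomm x) t
  rw [hvt] at h
  have h2 := mul_left_cancel₀ (hv0 x t) h
  push_cast at h2
  linear_combination h2 / 2
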